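/- Let k be a field and x, y ∈ O nonzero split octonions with Q(x) = Q(y) = 0 and dim_k(L(x) ∩ L(y)) = 2. Then L(x) ∩ L(y) equals the image of L(conj y) under left multiplication by x, and also the image of L(conj x) under left multiplication by y. Similarly, R(x) ∩ R(y) equals the image of R(conj y) under right multiplication by x, and also the image of R(conj x) under right multiplication by y. -/

import Mathlib

/-!
Write `x̄` for `oconj x` and `⟨x, y⟩` for `obil x y`. For a nonzero null octonion `x`, the identity
`x (z̄ w) + z (x̄ w) = ⟨x, z⟩ w` with `⟨x, z⟩ = 1` shows that `L(x)` is the kernel of left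
multiplication by `x̄`; since left multiplications by `x` and `x̄` are adjoint for the nondegenerate
form, they have the same rank, so `dim L(x) = 4` (`finrank_Lsub`).

Suppose `L(x) ∩ L(y) ≠ 0`. A vector `w` of the intersection is killed by `x̄` and `ȳ`, so
`⟨x, y⟩ w = x (ȳ w) + y (x̄ w) = 0`, and `⟨x, y⟩ = 0`. Put `T w = x (ȳ w)`. Then
`T w = - y (x̄ w)`, so the image of `T` lies in `L(x) ∩ L(y)` and both images in the left-hand
claims are this one. It remains to see that `T` has rank at least two.

* The form `⟨T w, w⟩ = ⟨x, y⟩ Q(w) = 0` is alternating, so `T` does not have rank one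
  (`eq_zero_of_finrank_range_le_one`).
* If `T = 0`, the identity `⟨x, z⟩ y = ⟨x, y⟩ z + ⟨y, z⟩ x - x (ȳ z) - z (ȳ x)` says that right
  multiplication by the null octonion `ȳ x` takes values in the span of `x` and `y`. As its rank
  is four unless `ȳ x = 0`, we get `ȳ x = 0`, and then the same identity makes `y` a multiple
  of `x`, so that `L(x) ∩ L(y) = L(y)` has dimension four (`prodMap_ne_zero`).

For the right-hand claims, rank–nullity for left multiplication by `x` on `L(ȳ)` gives
`dim (L(x̄) ∩ L(ȳ)) = 4 - rank T = 2`, so the left-hand claims apply to `x̄, ȳ`; conjugation,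
an anti-automorphism, turns them into the claims about `R(x)` and `R(y)`.
-/


open Matrix

/-- 2×2 matrices over `R`. -/
abbrev M2 (R : Type*) := Matrix (Fin 2) (Fin 2) R

/-- The split octonions over `R`: pairs of 2×2 matrices. -/
abbrev Oct (R : Type*) := M2 R × M2 R

variable {R : Type*} [CommRing R]

/-- Octonion multiplication (Cayley–Dickson on 2×2 matrices). -/
def omul (x y : Oct R) : Oct R :=
  (x.1 * y.1 - y.2.adjugate * x.2, x.2 * y.1.adjugate + y.2 * x.1)

/-- Octonion conjugation. -/
def oconj (x : Oct R) : Oct R := (x.1.adjugate, -x.2)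

/-- The norm of a split octonion. -/
def oQ (x : Oct R) : R := x.1.det + x.2.det

/-- The associated bilinear form. -/
def obil (x y : Oct R) : R := oQ (x + y) - oQ x - oQ y

lemma adj_add (A B : M2 R) : (A + B).adjugate = A.adjugate + B.adjugate := by
  ext i j
  fin_cases i <;> fin_cases j <;>
    simp [Matrix.adjugate_fin_two] <;> ring

lemma adj_smul (c : R) (A : M2 R) : (c • A).adjugate = c • A.adjugate := by
  rw [Matrix.adjugate_smul]
  norm_num

/-- Left multiplication by `z` as a linear map. -/
def Lmap (z : Oct R) : Oct R →ₗ[R] Oct R where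
  toFun w := omul z w
  map_add' a b := by
    simp only [omul, Prod.fst_add, Prod.snd_add, adj_add, Prod.mk_add_mk]
    rw [Prod.ext_iff]
    constructor <;> dsimp only <;> noncomm_ring
  map_smul' c a := by
    simp only [omul, Prod.smul_fst, Prod.smul_snd, adj_smul, RingHom.id_apply, Prod.smul_mk]
    rw [Prod.ext_iff]
    constructor <;> dsimp only <;>
      simp [Matrix.mul_smul, Matrix.smul_mul, smul_sub]

/-- Right multiplication by `z` as a linear map. -/
def Rmap (z : Oct R) : Oct R →ₗ[R] Oct R where
  toFun w := omul w z
  map_add' a b := by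
    simp only [omul, Prod.fst_add, Prod.snd_add, Prod.mk_add_mk]
    rw [Prod.ext_iff]
    constructor <;> dsimp only <;> noncomm_ring
  map_smul' c a := by
    simp only [omul, Prod.smul_fst, Prod.smul_snd, RingHom.id_apply, Prod.smul_mk]
    rw [Prod.ext_iff]
    constructor <;> dsimp only <;>
      simp [Matrix.mul_smul, Matrix.smul_mul, smul_sub]

/-- `L(z)`: the range of left multiplication by `z`. -/
def Lsub (z : Oct R) : Submodule R (Oct R) := LinearMap.range (Lmap z)

/-- `R(z)`: the range of right multiplication by `z`. -/
def Rsub (z : Oct R) : Submodule R (Oct R) := LinearMap.range (Rmap z)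

/-! ### Octonion identities -/

section identities

lemma adj_apply_00 (A : M2 R) : A.adjugate 0 0 = A 1 1 := by simp [adjugate_fin_two]

lemma adj_apply_01 (A : M2 R) : A.adjugate 0 1 = -A 0 1 := by simp [adjugate_fin_two]

lemma adj_apply_10 (A : M2 R) : A.adjugate 1 0 = -A 1 0 := by simp [adjugate_fin_two]

lemma adj_apply_11 (A : M2 R) : A.adjugate 1 1 = A 0 0 := by simp [adjugate_fin_two]

lemma oconj_oconj (x : Oct R) : oconj (oconj x) = x := by
  ext i j <;> fin_cases i <;> fin_cases j <;> simp [oconj, adj_apply_00, adj_apply_01, adj_apply_10, adj_apply_11]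

lemma oQ_oconj (x : Oct R) : oQ (oconj x) = oQ x := by
  simp [oQ, oconj, adj_apply_00, adj_apply_01, adj_apply_10, adj_apply_11, det_fin_two]; ring

lemma obil_oconj (x y : Oct R) : obil (oconj x) (oconj y) = obil x y := by
  simp [obil, oQ, oconj, adj_apply_00, adj_apply_01, adj_apply_10, adj_apply_11, det_fin_two]; ring

lemma oconj_omul (a b : Oct R) : oconj (omul a b) = omul (oconj b) (oconj a) := by
  ext i j <;> fin_cases i <;> fin_cases j <;>
    simp [oconj, omul, adj_apply_00, adj_apply_01, adj_apply_10, adj_apply_11, mul_apply, Fin.sum_univ_two] <;> ring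

lemma oQ_omul (a b : Oct R) : oQ (omul a b) = oQ a * oQ b := by
  simp [oQ, omul, adj_apply_00, adj_apply_01, adj_apply_10, adj_apply_11, det_fin_two, mul_apply, Fin.sum_univ_two]; ring

/-- The linearization of `x (x̄ w) = Q(x) w`. -/
lemma omul_oconj_add (x y w : Oct R) :
    omul x (omul (oconj y) w) + omul y (omul (oconj x) w) = obil x y • w := by
  ext i j <;> fin_cases i <;> fin_cases j <;>
    simp [obil, oQ, oconj, omul, adj_apply_00, adj_apply_01, adj_apply_10, adj_apply_11, det_fin_two, mul_apply, Fin.sum_univ_two] <;>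
    ring

lemma omul_omul_oconj (x w : Oct R) : omul x (omul (oconj x) w) = oQ x • w := by
  ext i j <;> fin_cases i <;> fin_cases j <;>
    simp [oQ, oconj, omul, adj_apply_00, adj_apply_01, adj_apply_10, adj_apply_11, det_fin_two, mul_apply, Fin.sum_univ_two] <;>
    ring

lemma oconj_omul_omul (x w : Oct R) : omul (oconj x) (omul x w) = oQ x • w := by
  have h := omul_omul_oconj (oconj x) w
  rwa [oconj_oconj, oQ_oconj] at h

lemma obil_prod_self (x y w : Oct R) :
    obil (omul x (omul (oconj y) w)) w = obil x y * oQ w := by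
  simp [obil, oQ, oconj, omul, adj_apply_00, adj_apply_01, adj_apply_10, adj_apply_11, det_fin_two, mul_apply, Fin.sum_univ_two]
  ring

lemma obil_omul_left (x a b : Oct R) : obil (omul x a) b = obil a (omul (oconj x) b) := by
  simp [obil, oQ, oconj, omul, adj_apply_00, adj_apply_01, adj_apply_10, adj_apply_11, det_fin_two, mul_apply, Fin.sum_univ_two]
  ring

/-- Combines the linearized left Moufang identity with the linearized norm identities
`(y x̄) z + (y z̄) x = ⟨x, z⟩ y` and `y z̄ + z ȳ = ⟨y, z⟩`. -/
lemma obil_smul_eq (x y z : Oct R) :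
    obil x z • y = obil x y • z + obil y z • x - omul x (omul (oconj y) z)
      - omul z (omul (oconj y) x) := by
  ext i j <;> fin_cases i <;> fin_cases j <;>
    simp [obil, oQ, oconj, omul, adj_apply_00, adj_apply_01, adj_apply_10, adj_apply_11, det_fin_two, mul_apply, Fin.sum_univ_two] <;>
    ring

/-- The bilinear form as a map from octonions to the dual space. -/
def obilDual : Oct R →ₗ[R] Module.Dual R (Oct R) :=
  LinearMap.mk₂ R obil
    (fun a b c => by simp [obil, oQ, det_fin_two]; ring)
    (fun a b c => by simp [obil, oQ, det_fin_two]; ring)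
    (fun a b c => by simp [obil, oQ, det_fin_two]; ring)
    (fun a b c => by simp [obil, oQ, det_fin_two]; ring)

lemma obilDual_apply (x y : Oct R) : obilDual x y = obil x y := rfl

lemma eq_zero_of_obil (x : Oct R) (h : ∀ z, obil x z = 0) : x = 0 := by
  have a1 := h (!![1, 0; 0, 0], 0)
  have a2 := h (!![0, 1; 0, 0], 0)
  have a3 := h (!![0, 0; 1, 0], 0)
  have a4 := h (!![0, 0; 0, 1], 0)
  have b1 := h (0, !![1, 0; 0, 0])
  have b2 := h (0, !![0, 1; 0, 0])
  have b3 := h (0, !![0, 0; 1, 0])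
  have b4 := h (0, !![0, 0; 0, 1])
  simp [obil, oQ, det_fin_two] at a1 a2 a3 a4 b1 b2 b3 b4
  ext i j <;> fin_cases i <;> fin_cases j <;> simp
  · linear_combination a4
  · linear_combination -a3
  · linear_combination -a2
  · linear_combination a1
  · linear_combination b4
  · linear_combination -b3
  · linear_combination -b2
  · linear_combination b1

/-- Conjugation as a linear automorphism. -/
def oconjEquiv : Oct R ≃ₗ[R] Oct R where
  toFun := oconj
  invFun := oconj
  left_inv := oconj_oconj
  right_inv := oconj_oconj
  map_add' a b := by
    ext i j <;> fin_cases i <;> fin_cases j <;> simp [oconj, adj_apply_00, adj_apply_01, adj_apply_10, adj_apply_11] <;> ring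
  map_smul' c a := by
    ext i j <;> fin_cases i <;> fin_cases j <;> simp [oconj, adj_apply_00, adj_apply_01, adj_apply_10, adj_apply_11]

lemma oconjEquiv_apply (x : Oct R) : oconjEquiv x = oconj x := rfl

lemma Lmap_apply (x w : Oct R) : Lmap x w = omul x w := rfl

lemma Rmap_apply (x w : Oct R) : Rmap x w = omul w x := rfl

lemma Rsub_eq_map (x : Oct R) : Rsub x = (Lsub (oconj x)).map oconjEquiv.toLinearMap := by
  ext w
  simp only [Rsub, Lsub, Submodule.mem_map, LinearMap.mem_range, Lmap_apply, Rmap_apply,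
    LinearEquiv.coe_coe, oconjEquiv_apply]
  constructor
  · rintro ⟨v, rfl⟩
    exact ⟨_, ⟨oconj v, rfl⟩, by rw [oconj_omul, oconj_oconj, oconj_oconj]⟩
  · rintro ⟨_, ⟨v, rfl⟩, rfl⟩
    exact ⟨oconj v, by rw [oconj_omul, oconj_oconj]⟩

lemma map_Rmap_Rsub (x y : Oct R) :
    (Rsub (oconj y)).map (Rmap x) =
      ((Lsub y).map (Lmap (oconj x))).map oconjEquiv.toLinearMap := by
  rw [Rsub_eq_map, oconj_oconj, ← Submodule.map_comp, ← Submodule.map_comp]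
  congr 1
  refine LinearMap.ext fun w => ?_
  simp only [LinearMap.comp_apply, Lmap_apply, Rmap_apply, LinearEquiv.coe_coe, oconjEquiv_apply,
    oconj_omul, oconj_oconj]

lemma oconj_ne_zero {x : Oct R} (hx : x ≠ 0) : oconj x ≠ 0 := fun h =>
  hx ((oconjEquiv (R := R)).map_eq_zero_iff.1 h)

end identities

/-! ### Left ideals of null octonions -/

section field

variable {k : Type*} [Field k]

lemma exists_obil_eq_one {x : Oct k} (hx : x ≠ 0) : ∃ z, obil x z = 1 := by
  by_contra! h
  refine hx (eq_zero_of_obil x fun z => ?_)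
  by_contra hz
  apply h ((obil x z)⁻¹ • z)
  rw [← obilDual_apply, map_smul, obilDual_apply, smul_eq_mul, inv_mul_cancel₀ hz]

lemma ker_Lmap {x : Oct k} (hx : x ≠ 0) (hq : oQ x = 0) :
    LinearMap.ker (Lmap x) = Lsub (oconj x) := by
  ext w
  simp only [Lsub, LinearMap.mem_ker, LinearMap.mem_range, Lmap_apply]
  constructor
  · intro h
    obtain ⟨z, hz⟩ := exists_obil_eq_one hx
    refine ⟨omul z w, ?_⟩
    have e := omul_oconj_add (oconj x) (oconj z) w
    rw [oconj_oconj, oconj_oconj, h, obil_oconj, hz, one_smul, ← Lmap_apply (oconj z),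
      map_zero, add_zero] at e
    exact e
  · rintro ⟨v, rfl⟩
    rw [omul_omul_oconj, hq, zero_smul]

lemma mem_Lsub_iff {x : Oct k} (hx : x ≠ 0) (hq : oQ x = 0) (w : Oct k) :
    w ∈ Lsub x ↔ omul (oconj x) w = 0 := by
  have h := ker_Lmap (oconj_ne_zero hx) (by rwa [oQ_oconj])
  rw [oconj_oconj] at h
  rw [← h]; rfl

/-- Holds because left multiplication by `x̄` is adjoint to left multiplication by `x` for the
nondegenerate form. -/
lemma finrank_Lsub_oconj_le (x : Oct k) :
    Module.finrank k (Lsub (oconj x)) ≤ Module.finrank k (Lsub x) := by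
  have hinj : Function.Injective (obilDual (R := k)) := by
    rw [← LinearMap.ker_eq_bot, LinearMap.ker_eq_bot']
    exact fun m hm => eq_zero_of_obil m fun z => by rw [← obilDual_apply, hm]; rfl
  have hcomm : obilDual ∘ₗ Lmap (oconj x) = (Lmap x).dualMap ∘ₗ obilDual := by
    refine LinearMap.ext fun a => LinearMap.ext fun b => ?_
    have h := obil_omul_left (oconj x) a b
    rwa [oconj_oconj] at h
  calc Module.finrank k (Lsub (oconj x))
      = Module.finrank k ((Lsub (oconj x)).map (obilDual (R := k))) :=
        (LinearEquiv.finrank_eq (Submodule.equivMapOfInjective _ hinj _))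
    _ = Module.finrank k (LinearMap.range ((Lmap x).dualMap ∘ₗ obilDual)) := by
        rw [← hcomm, LinearMap.range_comp]; rfl
    _ ≤ Module.finrank k (LinearMap.range (Lmap x).dualMap) :=
        Submodule.finrank_mono (LinearMap.range_comp_le_range _ _)
    _ = Module.finrank k (Lsub x) := LinearMap.finrank_range_dualMap_eq_finrank_range _

lemma finrank_Lsub {x : Oct k} (hx : x ≠ 0) (hq : oQ x = 0) :
    Module.finrank k (Lsub x) = 4 := by
  have h1 := finrank_Lsub_oconj_le x
  have h2 := finrank_Lsub_oconj_le (oconj x)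
  rw [oconj_oconj] at h2
  have h3 := LinearMap.finrank_range_add_finrank_ker (Lmap x)
  have h4 : Module.finrank k (Oct k) = 8 := by
    simp [Module.finrank_prod, Module.finrank_matrix]
  rw [ker_Lmap hx hq, h4] at h3
  change Module.finrank k (Lsub x) + _ = 8 at h3
  omega

lemma finrank_Rsub {x : Oct k} (hx : x ≠ 0) (hq : oQ x = 0) :
    Module.finrank k (Rsub x) = 4 := by
  rw [Rsub_eq_map, ← finrank_Lsub (oconj_ne_zero hx) (by rwa [oQ_oconj])]
  exact LinearEquiv.finrank_map_eq oconjEquiv _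

/-! ### The product of the left multiplications by `x` and `ȳ` -/

/-- An operator `T` for which `⟨T w, w⟩ = 0` identically does not have rank one. -/
lemma eq_zero_of_finrank_range_le_one (T : Oct k →ₗ[k] Oct k) (hT : ∀ w, obil (T w) w = 0)
    (hr : Module.finrank k (LinearMap.range T) ≤ 1) : T = 0 := by
  obtain ⟨⟨u, _⟩, hu⟩ := finrank_le_one_iff.1 hr
  have hc : ∀ w, ∃ c : k, c • u = T w := fun w => by
    obtain ⟨c, hc⟩ := hu ⟨T w, w, rfl⟩
    exact ⟨c, congrArg Subtype.val hc⟩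
  have key : ∀ w, T w ≠ 0 → obil u w = 0 := fun w hw => by
    obtain ⟨c, hcw⟩ := hc w
    have h := hT w
    rw [← hcw, ← obilDual_apply, map_smul, LinearMap.smul_apply, smul_eq_mul,
      obilDual_apply] at h
    refine (mul_eq_zero.1 h).resolve_left fun h0 => hw ?_
    rw [← hcw, h0, zero_smul]
  by_contra hne
  obtain ⟨w, hw⟩ : ∃ w, T w ≠ 0 := by
    by_contra! h
    exact hne (LinearMap.ext h)
  -- `u` is orthogonal to the complement of `ker T`, which spans the whole space.
  have hu0 : u = 0 := eq_zero_of_obil u fun v => by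
    by_cases hv : T v = 0
    · have h := key (v + w) (by rwa [map_add, hv, zero_add])
      rwa [← obilDual_apply, map_add, obilDual_apply, obilDual_apply, key w hw, add_zero] at h
    · exact key v hv
  obtain ⟨c, hcw⟩ := hc w
  exact hw (by rw [← hcw, hu0, smul_zero])

/-- If `x (ȳ w) = 0` for all `w`, then `y` is a multiple of `x` and `L(y) ≤ L(x)`, so that the
intersection has dimension four. -/
lemma prodMap_ne_zero {x y : Oct k} (hx : x ≠ 0) (hy : y ≠ 0) (hqx : oQ x = 0) (hqy : oQ y = 0)
    (hxy : obil x y = 0) (hdim : Module.finrank k ↥(Lsub x ⊓ Lsub y) = 2) :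
    Lmap x ∘ₗ Lmap (oconj y) ≠ 0 := by
  intro hT
  have hT' : ∀ w, omul x (omul (oconj y) w) = 0 := fun w => LinearMap.congr_fun hT w
  have hz : ∀ z, omul z (omul (oconj y) x) = obil y z • x - obil x z • y := fun z => by
    rw [obil_smul_eq x y z, hxy, hT', zero_smul]; abel
  have hq : omul (oconj y) x = 0 := by
    by_contra hne
    have h4 := finrank_Rsub hne (by rw [oQ_omul, hqx, mul_zero])
    have hle : Rsub (omul (oconj y) x) ≤ Submodule.span k {x, y} := by
      rintro _ ⟨z, rfl⟩
      rw [Rmap_apply, hz, Submodule.mem_span_pair]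
      exact ⟨obil y z, -obil x z, by rw [neg_smul, sub_eq_add_neg]⟩
    have h5 := Submodule.finrank_mono hle
    have h6 : Module.finrank k (Submodule.span k ({x, y} : Set (Oct k))) ≤ 2 := by
      classical
      have h := finrank_span_finset_le_card (R := k) ({x, y} : Finset (Oct k))
      rw [Finset.coe_pair] at h
      exact h.trans Finset.card_le_two
    omega
  obtain ⟨z, hxz⟩ := exists_obil_eq_one hx
  have h := hz z
  rw [hq, ← Lmap_apply, map_zero, hxz, one_smul] at h
  have hyx : y = obil y z • x := (sub_eq_zero.1 h.symm).symm
  have hle : Lsub y ≤ Lsub x := by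
    rintro _ ⟨v, rfl⟩
    have hv : Lmap y v = Lmap x (obil y z • v) := by
      conv_lhs => rw [hyx]
      simp [Lmap_apply, omul, smul_sub]
    exact hv ▸ ⟨_, rfl⟩
  rw [inf_eq_right.2 hle, finrank_Lsub hy hqy] at hdim
  omega

/-- The claims about left multiplications. The last part is the equality of the dimensions of
`L(x) ∩ L(y)` and `L(x̄) ∩ L(ȳ)`, which transfers the claims to right multiplications. -/
lemma left_part {x y : Oct k} (hx : x ≠ 0) (hy : y ≠ 0) (hqx : oQ x = 0) (hqy : oQ y = 0)
    (hdim : Module.finrank k ↥(Lsub x ⊓ Lsub y) = 2) :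
    Lsub x ⊓ Lsub y = (Lsub (oconj y)).map (Lmap x) ∧
    Lsub x ⊓ Lsub y = (Lsub (oconj x)).map (Lmap y) ∧
    Module.finrank k ↥(Lsub (oconj x) ⊓ Lsub (oconj y)) = 2 := by
  have hxy : obil x y = 0 := by
    by_contra hne
    have hbot : Lsub x ⊓ Lsub y = ⊥ := by
      rw [eq_bot_iff]
      rintro w ⟨h1, h2⟩
      have h1' := (mem_Lsub_iff hx hqx w).1 h1
      have h2' := (mem_Lsub_iff hy hqy w).1 h2
      have h := omul_oconj_add x y w
      rw [h1', h2', ← Lmap_apply, ← Lmap_apply, map_zero, map_zero, add_zero] at h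
      exact (smul_eq_zero.1 h.symm).resolve_left hne
    rw [hbot, finrank_bot] at hdim
    omega
  have hanti : ∀ w, omul x (omul (oconj y) w) = - omul y (omul (oconj x) w) := fun w => by
    rw [eq_neg_iff_add_eq_zero, omul_oconj_add, hxy, zero_smul]
  have hrange : ∀ a b : Oct k, (Lsub (oconj b)).map (Lmap a)
      = LinearMap.range (Lmap a ∘ₗ Lmap (oconj b)) := fun a b => (LinearMap.range_comp _ _).symm
  have hle : LinearMap.range (Lmap x ∘ₗ Lmap (oconj y)) ≤ Lsub x ⊓ Lsub y := by
    rintro _ ⟨w, rfl⟩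
    refine ⟨⟨_, rfl⟩, ?_⟩
    change omul x (omul (oconj y) w) ∈ Lsub y
    rw [hanti]
    exact neg_mem ⟨_, rfl⟩
  have hge : 2 ≤ Module.finrank k (LinearMap.range (Lmap x ∘ₗ Lmap (oconj y))) := by
    by_contra! hlt
    refine prodMap_ne_zero hx hy hqx hqy hxy hdim
      (eq_zero_of_finrank_range_le_one _ (fun w => ?_) (by omega))
    change obil (omul x (omul (oconj y) w)) w = 0
    rw [obil_prod_self, hxy, zero_mul]
  have heq := Submodule.eq_of_le_of_finrank_le hle (by omega)
  refine ⟨by rw [hrange, heq], ?_, ?_⟩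
  · rw [hrange, ← heq, ← LinearMap.range_neg]
    congr 1
    exact LinearMap.ext fun w => neg_eq_iff_eq_neg.2 (hanti w)
  · have h := LinearMap.finrank_range_add_finrank_ker ((Lmap x).domRestrict (Lsub (oconj y)))
    rw [LinearMap.range_domRestrict, hrange, heq, hdim, LinearMap.ker_domRestrict,
      ker_Lmap hx hqx, finrank_Lsub (oconj_ne_zero hy) (by rwa [oQ_oconj])] at h
    have e := (Submodule.equivSubtypeMap _
      (Submodule.comap (Lsub (oconj y)).subtype (Lsub (oconj x)))).finrank_eq
    rw [Submodule.map_comap_subtype, inf_comm] at e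
    omega

end field

theorem stmt3 (k : Type*) [Field k] (x y : Oct k) (hx : x ≠ 0) (hy : y ≠ 0)
    (hqx : oQ x = 0) (hqy : oQ y = 0)
    (hdim : Module.finrank k ↥(Lsub x ⊓ Lsub y) = 2) :
    Lsub x ⊓ Lsub y = Submodule.map (Lmap x) (Lsub (oconj y)) ∧
    Lsub x ⊓ Lsub y = Submodule.map (Lmap y) (Lsub (oconj x)) ∧
    Rsub x ⊓ Rsub y = Submodule.map (Rmap x) (Rsub (oconj y)) ∧
    Rsub x ⊓ Rsub y = Submodule.map (Rmap y) (Rsub (oconj x)) := by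
  obtain ⟨h1, h2, h3⟩ := left_part hx hy hqx hqy hdim
  obtain ⟨h4, h5, -⟩ := left_part (oconj_ne_zero hx) (oconj_ne_zero hy)
    (by rwa [oQ_oconj]) (by rwa [oQ_oconj]) h3
  rw [oconj_oconj] at h4 h5
  refine ⟨h1, h2, ?_, ?_⟩
  · rw [map_Rmap_Rsub, ← h4, Rsub_eq_map, Rsub_eq_map,
      Submodule.map_inf _ oconjEquiv.injective]
  · rw [map_Rmap_Rsub, ← h5, Rsub_eq_map, Rsub_eq_map,
      Submodule.map_inf _ oconjEquiv.injective]
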